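/- Unconditional covering upper bound: Under Assumptions I on the codebook structure, for any 0 < ε < 1, P(Z = 0) ≤ (1/ε) P(F^c) + (1/(1−ε)) |M|^{−1} e^{γ} + (1/(1−ε)²) ∑_{∅⊊S⊊[k]} |M_S|^{−1} e^{−α_S − 2β_{S^c} + 2γ}, where Z is the number of m ∈ M = ∏_j [M_j] such that (U₀, U₁(m₁),…,U_k(m_k), U_{k+1}) ∈ F. -/

import Mathlib

open Finset Real

/-- Marginal of the joint pmf `p` onto `(u₀, (u_j)_{j∈S}, u_{k+1})`,
evaluated at a full tuple `z`. -/
def cvMargS {k : ℕ} {Ω₀ B : Type*} {A : Fin k → Type*}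
    [Fintype Ω₀] [Fintype B] [∀ j, Fintype (A j)]
    [DecidableEq Ω₀] [DecidableEq B] [∀ j, DecidableEq (A j)]
    (p : Ω₀ × (∀ j, A j) × B → ℝ) (S : Finset (Fin k))
    (z : Ω₀ × (∀ j, A j) × B) : ℝ :=
  ∑ w ∈ Finset.univ.filter (fun w : Ω₀ × (∀ j, A j) × B =>
    w.1 = z.1 ∧ (∀ j ∈ S, w.2.1 j = z.2.1 j) ∧ w.2.2 = z.2.2), p w

/-- Projection `F_S` of `F` onto the `(u₀, u_S, u_{k+1})` coordinates. -/
def cvProjS {k : ℕ} {Ω₀ B : Type*} {A : Fin k → Type*}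
    (F : Set (Ω₀ × (∀ j, A j) × B)) (S : Finset (Fin k)) :
    Set (Ω₀ × (∀ j, A j) × B) :=
  {z | ∃ y : ∀ j, A j, (∀ j ∈ S, y j = z.2.1 j) ∧ (z.1, y, z.2.2) ∈ F}

open scoped Classical in
/-- number of pairs agreeing on `S`. -/
lemma cv_count {k : ℕ} (M : Fin k → ℕ) (hM : ∀ j, 0 < M j) (S : Finset (Fin k)) :
    ∑ m : (∀ j, Fin (M j)), ∑ m' : (∀ j, Fin (M j)),
      (if Finset.univ.filter (fun j => m j = m' j) = S then (1:ℝ) else 0)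
    ≤ (∏ j, (M j : ℝ)) ^ 2 * (∏ j ∈ S, (M j : ℝ))⁻¹ := by
  have hSpos : 0 < ∏ j ∈ S, (M j : ℝ) := Finset.prod_pos fun j _ => by exact_mod_cast hM j
  have h1 : ∀ m : (∀ j, Fin (M j)), ∑ m' : (∀ j, Fin (M j)),
      (if Finset.univ.filter (fun j => m j = m' j) = S then (1:ℝ) else 0)
      ≤ (∏ j, (M j : ℝ)) * (∏ j ∈ S, (M j : ℝ))⁻¹ := by
    intro m
    rw [Finset.sum_boole]
    have hsub : (Finset.univ.filter (fun m' : (∀ j, Fin (M j)) =>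
        Finset.univ.filter (fun j => m j = m' j) = S)) ⊆
        Fintype.piFinset (fun j => if j ∈ S then {m j} else Finset.univ) := by
      intro m' hm'
      simp only [Finset.mem_filter, Finset.mem_univ, true_and] at hm'
      rw [Fintype.mem_piFinset]
      intro j
      by_cases hj : j ∈ S
      · rw [if_pos hj]
        rw [← hm'] at hj
        simp only [Finset.mem_filter, Finset.mem_univ, true_and] at hj
        simp [hj]
      · simp [hj]
    have hc := Finset.card_le_card hsub
    rw [Fintype.card_piFinset] at hc
    have e : ((∏ j, (if j ∈ S then {m j} else Finset.univ : Finset (Fin (M j))).card : ℕ) : ℝ)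
        = (∏ j, (M j : ℝ)) * (∏ j ∈ S, (M j : ℝ))⁻¹ := by
      rw [← Finset.prod_mul_prod_compl S (fun j => (M j : ℝ)), mul_comm (∏ j ∈ S, (M j : ℝ)),
        mul_assoc, mul_inv_cancel₀ hSpos.ne', mul_one]
      push_cast
      rw [← Finset.prod_mul_prod_compl S]
      rw [Finset.prod_eq_one (s := S), one_mul]
      · refine Finset.prod_congr rfl fun j hj => ?_
        rw [Finset.mem_compl] at hj
        simp [hj]
      · intro j hj
        simp [hj]
    rw [← e]
    exact_mod_cast hc
  refine (Finset.sum_le_sum fun m _ => h1 m).trans ?_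
  rw [Finset.sum_const, nsmul_eq_mul, Finset.card_univ, Fintype.card_pi]
  simp only [Fintype.card_fin]
  push_cast
  apply le_of_eq; ring

set_option maxHeartbeats 400000 in
open scoped Classical in
/-- Conditional Chebyshev bound for a fixed slice. -/
lemma cv_core {k : ℕ} {A : Fin k → Type*} [∀ j, Fintype (A j)] [∀ j, DecidableEq (A j)]
    (M : Fin k → ℕ) (hM : ∀ j, 0 < M j)
    (q : ∀ j, A j → ℝ) (hq : ∀ j a, 0 ≤ q j a)
    (pr : (∀ j, A j) → ℝ) (hpr : ∀ x, 0 ≤ pr x)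
    (ν : (∀ j, Fin (M j) → A j) → ℝ) (hν : ∀ w, 0 ≤ ν w)
    (r : ℝ) (hr : 0 < r) (hprr : ∑ x, pr x = r) (hνr : ∑ w, ν w = r)
    (hlaw : ∀ (m : ∀ j, Fin (M j)) (x : ∀ j, A j),
      ∑ w ∈ Finset.univ.filter (fun w : (∀ j, Fin (M j) → A j) => ∀ j, w j (m j) = x j), ν w
        = r * ∏ j, q j (x j))
    (hpair : ∀ (m m' : ∀ j, Fin (M j)), m ≠ m' → ∀ (x x' : ∀ j, A j),
      (∀ j, m j = m' j → x j = x' j) →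
      ∑ w ∈ Finset.univ.filter (fun w : (∀ j, Fin (M j) → A j) =>
        (∀ j, w j (m j) = x j) ∧ (∀ j, w j (m' j) = x' j)), ν w
        = r * (∏ j, q j (x j)) *
            ∏ j ∈ Finset.univ.filter (fun j => m j ≠ m' j), q j (x' j))
    (F : Finset (∀ j, A j)) (γ : ℝ)
    (hγ : ∀ x ∈ F, pr x ≤ Real.exp γ * (r * ∏ j, q j (x j)))
    (α β : Finset (Fin k) → ℝ)
    (hα : ∀ S : Finset (Fin k), S.Nonempty → S ≠ Finset.univ → ∀ x ∈ F,
      Real.exp (α S) * (r * ∏ j ∈ S, q j (x j))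
        ≤ ∑ y ∈ Finset.univ.filter (fun y : (∀ j, A j) => ∀ j ∈ S, y j = x j), pr y)
    (hβ : ∀ S : Finset (Fin k), S.Nonempty → S ≠ Finset.univ → ∀ x ∈ F,
      Real.exp (β Sᶜ) *
        ((∑ y ∈ Finset.univ.filter (fun y : (∀ j, A j) => ∀ j ∈ S, y j = x j), pr y) *
          ∏ j ∈ Sᶜ, q j (x j)) ≤ pr x)
    (ε : ℝ) (hε1 : ε < 1)
    (hG : (1 - ε) * r ≤ ∑ x ∈ F, pr x) :
    ∑ w ∈ Finset.univ.filter (fun w : (∀ j, Fin (M j) → A j) =>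
        ∀ m : ∀ j, Fin (M j), (fun j => w j (m j)) ∉ F), ν w
    ≤ r * ((1 / (1 - ε)) * (∏ j, (M j : ℝ))⁻¹ * Real.exp γ
      + (1 / (1 - ε)) ^ 2 *
        ∑ S ∈ Finset.univ.filter (fun S : Finset (Fin k) => S.Nonempty ∧ S ≠ Finset.univ),
          (∏ j ∈ S, (M j : ℝ))⁻¹ * Real.exp (-α S - 2 * β Sᶜ + 2 * γ)) := by
  have h1ε : 0 < 1 - ε := by linarith
  set N : ℝ := ∏ j, (M j : ℝ) with hN
  have hNpos : 0 < N := Finset.prod_pos fun j _ => by exact_mod_cast hM j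
  set Q : ℝ := ∑ x ∈ F, ∏ j, q j (x j) with hQ
  let T : Finset (Fin k) → ℝ := fun S => ∑ x ∈ F, ∑ x' ∈ F.filter (fun x' => ∀ j ∈ S, x' j = x j),
    (∏ j, q j (x j)) * ∏ j ∈ Sᶜ, q j (x' j)
  have hprod : ∀ (S : Finset (Fin k)) (x : ∀ j, A j), 0 ≤ ∏ j ∈ S, q j (x j) :=
    fun S x => Finset.prod_nonneg fun j _ => hq j _
  have hT0 : ∀ S, 0 ≤ T S := fun S => Finset.sum_nonneg fun x _ => Finset.sum_nonneg fun x' _ =>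
    mul_nonneg (hprod _ _) (hprod _ _)
  -- lower bound on Q
  have hQlow : (1 - ε) ≤ Real.exp γ * Q := by
    have : (1 - ε) * r ≤ (Real.exp γ * Q) * r := by
      refine hG.trans ((Finset.sum_le_sum hγ).trans (le_of_eq ?_))
      rw [← Finset.mul_sum, ← Finset.mul_sum]; ring
    exact le_of_mul_le_mul_right this hr
  have hQpos : 0 < Q := by
    by_contra h
    push Not at h
    have := mul_nonpos_of_nonneg_of_nonpos (Real.exp_pos γ).le h
    linarith
  -- upper bound on T
  have hTup : ∀ S : Finset (Fin k), S.Nonempty → S ≠ Finset.univ →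
      T S ≤ Real.exp (-α S - 2 * β Sᶜ) := by
    intro S hS1 hS2
    let pS : (∀ j, A j) → ℝ := fun x =>
      ∑ y ∈ Finset.univ.filter (fun y : (∀ j, A j) => ∀ j ∈ S, y j = x j), pr y
    have hpS0 : ∀ x, 0 ≤ pS x := fun x => Finset.sum_nonneg fun y _ => hpr y
    have step : ∀ x ∈ F, ∑ x' ∈ F.filter (fun x' => ∀ j ∈ S, x' j = x j),
        (∏ j, q j (x j)) * ∏ j ∈ Sᶜ, q j (x' j) ≤ Real.exp (-α S - 2 * β Sᶜ) * (pr x / r) := by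
      intro x hx
      have ha : Real.exp (α S) * (r * ∏ j ∈ S, q j (x j)) ≤ pS x := hα S hS1 hS2 x hx
      have hb : Real.exp (β Sᶜ) * (pS x * ∏ j ∈ Sᶜ, q j (x j)) ≤ pr x := hβ S hS1 hS2 x hx
      set I := ∑ x' ∈ F.filter (fun x' => ∀ j ∈ S, x' j = x j), ∏ j ∈ Sᶜ, q j (x' j) with hI
      rw [← Finset.mul_sum, ← hI, ← Finset.prod_mul_prod_compl S]
      have hI0 : 0 ≤ I := Finset.sum_nonneg fun x' _ => hprod _ _
      have hin : Real.exp (β Sᶜ) * (pS x * I) ≤ pS x := by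
        rw [hI, Finset.mul_sum, Finset.mul_sum]
        calc _ ≤ ∑ x' ∈ F.filter (fun x' => ∀ j ∈ S, x' j = x j), pr x' := by
              refine Finset.sum_le_sum fun x' hx' => ?_
              rw [Finset.mem_filter] at hx'
              have := hβ S hS1 hS2 x' hx'.1
              have e : (Finset.univ.filter (fun y : (∀ j, A j) => ∀ j ∈ S, y j = x' j)) =
                  Finset.univ.filter (fun y : (∀ j, A j) => ∀ j ∈ S, y j = x j) := by
                refine Finset.filter_congr fun y _ => ?_
                refine forall₂_congr fun j hj => ?_
                rw [hx'.2 j hj]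
              rw [e] at this
              exact this
          _ ≤ pS x := by
              refine Finset.sum_le_sum_of_subset_of_nonneg ?_ fun y _ _ => hpr y
              exact Finset.filter_subset_filter _ (Finset.subset_univ _)
      have eE : Real.exp (-α S - 2 * β Sᶜ) =
          (Real.exp (α S))⁻¹ * (Real.exp (β Sᶜ))⁻¹ * (Real.exp (β Sᶜ))⁻¹ := by
        rw [← Real.exp_neg, ← Real.exp_neg, ← Real.exp_add, ← Real.exp_add]; congr 1; ring
      rw [eE]
      set a := Real.exp (α S) with ha'
      set b := Real.exp (β Sᶜ) with hb'
      have hapos : 0 < a := Real.exp_pos _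
      have hbpos : 0 < b := Real.exp_pos _
      set P1 := ∏ j ∈ S, q j (x j)
      set P2 := ∏ j ∈ Sᶜ, q j (x j)
      have hP1 : 0 ≤ P1 := hprod _ _
      have hP2 : 0 ≤ P2 := hprod _ _
      have key : a * (r * P1) * b * I * (b * P2) ≤ pr x := by
        calc a * (r * P1) * b * I * (b * P2) ≤ pS x * b * I * (b * P2) := by gcongr
          _ = (b * (pS x * I)) * (b * P2) := by ring
          _ ≤ pS x * (b * P2) := by gcongr
          _ = b * (pS x * P2) := by ring
          _ ≤ pr x := hb
      have : P1 * P2 * I = a⁻¹ * b⁻¹ * b⁻¹ * ((a * (r * P1) * b * I * (b * P2)) / r) := by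
        field_simp
      rw [this]
      gcongr
    calc T S ≤ ∑ x ∈ F, Real.exp (-α S - 2 * β Sᶜ) * (pr x / r) := Finset.sum_le_sum step
      _ = Real.exp (-α S - 2 * β Sᶜ) * ((∑ x ∈ F, pr x) / r) := by
          rw [Finset.sum_div, Finset.mul_sum]
      _ ≤ Real.exp (-α S - 2 * β Sᶜ) * 1 := by
          gcongr
          rw [div_le_one hr, ← hprr]
          exact Finset.sum_le_sum_of_subset_of_nonneg (Finset.subset_univ _) fun y _ _ => hpr y
      _ = _ := mul_one _
  -- indicator
  let χ : (∀ j, Fin (M j)) → (∀ j, Fin (M j) → A j) → ℝ :=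
    fun m w => if (fun j => w j (m j)) ∈ F then 1 else 0
  have hχ : ∀ m w, χ m w = ∑ x ∈ F, if (∀ j, w j (m j) = x j) then (1:ℝ) else 0 := by
    intro m w
    have : ∀ x : (∀ j, A j), (∀ j, w j (m j) = x j) ↔ (fun j => w j (m j)) = x :=
      fun x => (funext_iff (f := fun j => w j (m j)) (g := x)).symm
    simp only [this, Finset.sum_ite_eq, χ]
  have hE1 : ∀ m, ∑ w, ν w * χ m w = r * Q := by
    intro m
    simp only [hχ, Finset.mul_sum]
    rw [Finset.sum_comm, hQ, Finset.mul_sum]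
    refine Finset.sum_congr rfl fun x _ => ?_
    rw [← hlaw m x, Finset.sum_filter]
    refine Finset.sum_congr rfl fun w _ => ?_
    split_ifs <;> simp
  have hE2 : ∀ m m', m ≠ m' → ∑ w, ν w * (χ m w * χ m' w) =
      r * T (Finset.univ.filter (fun j => m j = m' j)) := by
    intro m m' hmm
    have hS : (Finset.univ.filter (fun j => m j = m' j))ᶜ =
        Finset.univ.filter (fun j => m j ≠ m' j) := by
      ext j; simp
    simp only [T, hS]
    have e0 : ∀ w, ν w * (χ m w * χ m' w) = ∑ x ∈ F, ∑ x' ∈ F,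
        ν w * ((if (∀ j, w j (m j) = x j) then (1:ℝ) else 0) *
        (if (∀ j, w j (m' j) = x' j) then (1:ℝ) else 0)) := by
      intro w
      rw [hχ, hχ, Finset.sum_mul_sum, Finset.mul_sum]
      refine Finset.sum_congr rfl fun x _ => ?_
      rw [Finset.mul_sum]
    rw [Finset.sum_congr rfl fun w _ => e0 w, Finset.sum_comm, Finset.mul_sum]
    refine Finset.sum_congr rfl fun x _ => ?_
    rw [Finset.sum_comm, Finset.mul_sum, Finset.sum_filter]
    refine Finset.sum_congr rfl fun x' _ => ?_
    have e1 : ∑ w, ν w * ((if (∀ j, w j (m j) = x j) then (1:ℝ) else 0) *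
        (if (∀ j, w j (m' j) = x' j) then (1:ℝ) else 0)) =
        ∑ w ∈ Finset.univ.filter (fun w : (∀ j, Fin (M j) → A j) =>
        (∀ j, w j (m j) = x j) ∧ (∀ j, w j (m' j) = x' j)), ν w := by
      rw [Finset.sum_filter]
      refine Finset.sum_congr rfl fun w _ => ?_
      by_cases h1 : (∀ j, w j (m j) = x j) <;> by_cases h2 : (∀ j, w j (m' j) = x' j) <;>
        simp [h1, h2]
    rw [e1]
    split_ifs with hc
    · rw [hpair m m' hmm x x' (fun j hj => (hc j (by simpa using hj)).symm)]
      ring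
    · refine Finset.sum_eq_zero fun w hw => ?_
      exfalso
      simp only [Finset.mem_filter, Finset.mem_univ, true_and] at hw
      apply hc
      intro j hj
      simp only [Finset.mem_filter, Finset.mem_univ, true_and] at hj
      rw [← hw.1 j, ← hw.2 j, hj]
  have hTempty : T ∅ = Q ^ 2 := by
    simp only [T, Finset.notMem_empty, false_imp_iff, implies_true, Finset.filter_true,
      Finset.compl_empty]
    rw [sq, hQ, Finset.sum_mul_sum]
  have hsq : ∀ m w, χ m w * χ m w = χ m w := by
    intro m w; simp only [χ]; split_ifs <;> simp
  set 𝒮 := Finset.univ.filter (fun S : Finset (Fin k) => S.Nonempty ∧ S ≠ Finset.univ) with h𝒮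
  -- covariance bound
  have hcov : ∀ m m' : (∀ j, Fin (M j)), ∑ w, ν w * ((χ m w - Q) * (χ m' w - Q)) ≤
      r * ((if m = m' then Q else 0) + ∑ S ∈ 𝒮,
        (if Finset.univ.filter (fun j => m j = m' j) = S then (1:ℝ) else 0) * T S) := by
    intro m m'
    have e : ∑ w, ν w * ((χ m w - Q) * (χ m' w - Q)) =
        ∑ w, ν w * (χ m w * χ m' w) - r * Q ^ 2 := by
      have : ∀ w, ν w * ((χ m w - Q) * (χ m' w - Q)) =
          ν w * (χ m w * χ m' w) - Q * (ν w * χ m w) - Q * (ν w * χ m' w) + Q ^ 2 * ν w := by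
        intro w; ring
      simp only [this, Finset.sum_add_distrib, Finset.sum_sub_distrib, ← Finset.mul_sum, hE1, hνr]
      ring
    rw [e]
    have hs0 : 0 ≤ ∑ S ∈ 𝒮,
        (if Finset.univ.filter (fun j => m j = m' j) = S then (1:ℝ) else 0) * T S :=
      Finset.sum_nonneg fun S _ => mul_nonneg (by split_ifs <;> norm_num) (hT0 S)
    by_cases hmm : m = m'
    · subst hmm
      have e' : ∑ w, ν w * (χ m w * χ m w) = r * Q := by simp only [hsq, hE1]
      rw [e', if_pos rfl]
      nlinarith [mul_nonneg hr.le (sq_nonneg Q), mul_nonneg hr.le hs0]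
    · rw [hE2 m m' hmm, if_neg hmm, zero_add]
      set S := Finset.univ.filter (fun j => m j = m' j) with hSdef
      by_cases hSe : S = ∅
      · rw [hSe, hTempty, sub_self]
        rw [hSe] at hs0
        exact mul_nonneg hr.le hs0
      · have hmem : S ∈ 𝒮 := by
          simp only [h𝒮, Finset.mem_filter, Finset.mem_univ, true_and]
          refine ⟨Finset.nonempty_iff_ne_empty.2 hSe, fun h => hmm ?_⟩
          funext j
          have : j ∈ S := by rw [h]; exact Finset.mem_univ j
          simpa [hSdef] using this
        have : ∑ S' ∈ 𝒮, (if S = S' then (1:ℝ) else 0) * T S' = T S := by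
          simp [ite_mul, hmem]
        rw [this]
        nlinarith [mul_nonneg hr.le (sq_nonneg Q)]
  -- Chebyshev
  have hcardN : ∑ _m : (∀ j, Fin (M j)), (1:ℝ) = N := by
    simp [hN]
  have hcheb : (N * Q) ^ 2 * ∑ w ∈ Finset.univ.filter (fun w : (∀ j, Fin (M j) → A j) =>
        ∀ m : ∀ j, Fin (M j), (fun j => w j (m j)) ∉ F), ν w ≤
      ∑ w, ν w * (∑ m, (χ m w - Q)) ^ 2 := by
    rw [Finset.mul_sum]
    refine le_trans (le_of_eq ?_) (Finset.sum_le_sum_of_subset_of_nonneg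
      (Finset.subset_univ (Finset.univ.filter (fun w : (∀ j, Fin (M j) → A j) =>
        ∀ m : ∀ j, Fin (M j), (fun j => w j (m j)) ∉ F)))
        fun w _ _ => mul_nonneg (hν w) (sq_nonneg _))
    refine Finset.sum_congr rfl fun w hw => ?_
    simp only [Finset.mem_filter, Finset.mem_univ, true_and] at hw
    have : ∑ m, (χ m w - Q) = - (N * Q) := by
      rw [← hcardN, Finset.sum_mul, ← Finset.sum_neg_distrib]
      refine Finset.sum_congr rfl fun m _ => ?_
      simp only [χ, if_neg (hw m)]; ring
    rw [this]; ring
  clear_value χ T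
  have hvar : ∑ w, ν w * (∑ m, (χ m w - Q)) ^ 2 ≤
      r * (N * Q + ∑ S ∈ 𝒮, (N ^ 2 * (∏ j ∈ S, (M j : ℝ))⁻¹) * T S) := by
    calc ∑ w, ν w * (∑ m, (χ m w - Q)) ^ 2
        = ∑ m, ∑ m', ∑ w, ν w * ((χ m w - Q) * (χ m' w - Q)) := by
          have e3 : ∀ w, ν w * (∑ m, (χ m w - Q)) ^ 2 =
              ∑ m, ∑ m', ν w * ((χ m w - Q) * (χ m' w - Q)) := by
            intro w
            rw [sq, Finset.sum_mul_sum, Finset.mul_sum]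
            refine Finset.sum_congr rfl fun m _ => ?_
            rw [Finset.mul_sum]
          rw [Finset.sum_congr rfl fun w _ => e3 w, Finset.sum_comm]
          refine Finset.sum_congr rfl fun m _ => ?_
          rw [Finset.sum_comm]
      _ ≤ ∑ m : (∀ j, Fin (M j)), ∑ m' : (∀ j, Fin (M j)), r * ((if m = m' then Q else 0) + ∑ S ∈ 𝒮,
        (if Finset.univ.filter (fun j => m j = m' j) = S then (1:ℝ) else 0) * T S) :=
          Finset.sum_le_sum fun m _ => Finset.sum_le_sum fun m' _ => hcov m m'
      _ = r * (N * Q + ∑ S ∈ 𝒮, (∑ m : (∀ j, Fin (M j)), ∑ m' : (∀ j, Fin (M j)),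
        (if Finset.univ.filter (fun j => m j = m' j) = S then (1:ℝ) else 0)) * T S) := by
          simp only [← Finset.mul_sum, Finset.sum_add_distrib]
          congr 2
          · simp only [Finset.sum_ite_eq, Finset.mem_univ, if_true]
            rw [← hcardN, Finset.sum_mul]; simp
          · simp only [Finset.sum_mul]
            rw [Finset.sum_comm (s := 𝒮)]
            refine Finset.sum_congr rfl fun m _ => ?_
            rw [Finset.sum_comm]
      _ ≤ _ := by
          gcongr with S hS
          · exact hT0 S
          · exact cv_count M hM S
  have hNQ : 0 < (N * Q) ^ 2 := by positivity
  have hfin := hcheb.trans hvar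
  rw [mul_comm, ← le_div_iff₀ hNQ] at hfin
  refine hfin.trans ?_
  rw [mul_div_assoc]
  refine mul_le_mul_of_nonneg_left ?_ hr.le
  have hQinv : Q⁻¹ ≤ (1 / (1 - ε)) * Real.exp γ := by
    rw [inv_eq_one_div, div_mul_eq_mul_div, one_mul, div_le_div_iff₀ hQpos h1ε]
    linarith
  have hQi0 : 0 ≤ Q⁻¹ := by positivity
  rw [add_div]
  refine add_le_add ?_ ?_
  · have : N * Q / (N * Q) ^ 2 = N⁻¹ * Q⁻¹ := by field_simp
    rw [this]
    calc N⁻¹ * Q⁻¹ ≤ N⁻¹ * ((1 / (1 - ε)) * Real.exp γ) := by gcongr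
      _ = _ := by ring
  · clear_value Q
    rw [Finset.sum_div, Finset.mul_sum]
    apply Finset.sum_le_sum
    intro S hS
    simp only [h𝒮, Finset.mem_filter, Finset.mem_univ, true_and] at hS
    have hMS : 0 ≤ (∏ j ∈ S, (M j : ℝ))⁻¹ := by positivity
    have : N ^ 2 * (∏ j ∈ S, (M j : ℝ))⁻¹ * T S / (N * Q) ^ 2 =
        (∏ j ∈ S, (M j : ℝ))⁻¹ * (T S * (Q⁻¹) ^ 2) := by
      field_simp
    rw [this]
    have e2 : Real.exp (-α S - 2 * β Sᶜ + 2 * γ) =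
        Real.exp (-α S - 2 * β Sᶜ) * Real.exp γ ^ 2 := by
      rw [Real.exp_add, ← Real.exp_nat_mul]; norm_num
    calc _ ≤ (∏ j ∈ S, (M j : ℝ))⁻¹ * (Real.exp (-α S - 2 * β Sᶜ) *
          ((1 / (1 - ε)) * Real.exp γ) ^ 2) := by
          gcongr
          exact hTup S hS.1 hS.2
      _ = _ := by rw [e2]; ring

open scoped Classical in
lemma cv_slice {Ω₀ X B : Type*} [Fintype Ω₀] [Fintype X] [Fintype B]
    (f : Ω₀ × X × B → ℝ) (a : Ω₀) (b : B) (P : X → Prop) (Q : Ω₀ × X × B → Prop)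
    (hQ : ∀ w, Q w ↔ w.1 = a ∧ P w.2.1 ∧ w.2.2 = b) [DecidablePred Q] [DecidablePred P] :
    ∑ w ∈ Finset.univ.filter Q, f w = ∑ x ∈ Finset.univ.filter P, f (a, x, b) := by
  symm
  refine Finset.sum_nbij' (fun x => (a, x, b)) (fun w => w.2.1) ?_ ?_ ?_ ?_ ?_
  · intro x hx; simpa [hQ] using hx
  · intro w hw; simp only [Finset.mem_filter, Finset.mem_univ, true_and, hQ] at hw ⊢; exact hw.2.1
  · intro x hx; rfl
  · rintro ⟨w1, w2, w3⟩ hw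
    simp only [Finset.mem_filter, Finset.mem_univ, true_and, hQ] at hw
    obtain ⟨rfl, -, rfl⟩ := hw; rfl
  · intro x hx; rfl

open scoped Classical in
/-- **Unconditional covering upper bound.**  Under Assumption I on the
codebook structure, for any `0 < ε < 1`,
`P(Z = 0) ≤ (1/ε)·P(Fᶜ) + (1/(1−ε))·|M|⁻¹·e^γ
  + (1/(1−ε))²·∑_{∅⊊S⊊[k]} |M_S|⁻¹·e^{−α_S − 2β_{Sᶜ} + 2γ}`,
where `Z` counts the `m ∈ M = ∏_j [M_j]` with
`(U₀, U₁(m₁),…,U_k(m_k), U_{k+1}) ∈ F`, `P(Fᶜ)` is computed under the true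
joint pmf `p`, and `γ, α_S, β_{Sᶜ}` are the change-of-measure constants. -/
theorem covering_stmt16
    {k : ℕ} {Ω₀ B : Type*} {A : Fin k → Type*}
    [Fintype Ω₀] [Fintype B] [∀ j, Fintype (A j)]
    [DecidableEq Ω₀] [DecidableEq B] [∀ j, DecidableEq (A j)]
    (p : Ω₀ × (∀ j, A j) × B → ℝ)
    (hp0 : ∀ z, 0 ≤ p z) (hp1 : ∑ z, p z = 1)
    (q0 : Ω₀ → ℝ) (qj : ∀ j : Fin k, Ω₀ → A j → ℝ) (qB : Ω₀ → B → ℝ)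
    (hq0 : ∀ u₀, q0 u₀ =
      ∑ z ∈ Finset.univ.filter (fun z : Ω₀ × (∀ j, A j) × B => z.1 = u₀), p z)
    (hqj : ∀ (j : Fin k) u₀ a, 0 ≤ qj j u₀ a ∧ q0 u₀ * qj j u₀ a =
      ∑ z ∈ Finset.univ.filter
        (fun z : Ω₀ × (∀ j, A j) × B => z.1 = u₀ ∧ z.2.1 j = a), p z)
    (hqB : ∀ u₀ b, 0 ≤ qB u₀ b ∧ q0 u₀ * qB u₀ b =
      ∑ z ∈ Finset.univ.filter
        (fun z : Ω₀ × (∀ j, A j) × B => z.1 = u₀ ∧ z.2.2 = b), p z)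
    (M : Fin k → ℕ) (hM : ∀ j, 0 < M j)
    (μ : Ω₀ × (∀ j, Fin (M j) → A j) × B → ℝ)
    (hμ0 : ∀ ω, 0 ≤ μ ω) (hμ1 : ∑ ω, μ ω = 1)
    -- each `m`-indexed tuple has law `p(u₀)·∏_j p(u_j|u₀)·p(u_{k+1}|u₀)`
    (hlaw : ∀ (m : ∀ j, Fin (M j)) (z : Ω₀ × (∀ j, A j) × B),
      ∑ ω ∈ Finset.univ.filter (fun ω : Ω₀ × (∀ j, Fin (M j) → A j) × B =>
          ω.1 = z.1 ∧ (∀ j, ω.2.1 j (m j) = z.2.1 j) ∧ ω.2.2 = z.2.2), μ ω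
        = q0 z.1 * (∏ j, qj j z.1 (z.2.1 j)) * qB z.1 z.2.2)
    -- Assumption I: pairwise joint law of codewords for distinct `m, m'`
    (hpairlaw : ∀ (m m' : ∀ j, Fin (M j)), m ≠ m' →
      ∀ (z : Ω₀ × (∀ j, A j) × B) (x' : ∀ j, A j),
        (∀ j, m j = m' j → z.2.1 j = x' j) →
      ∑ ω ∈ Finset.univ.filter (fun ω : Ω₀ × (∀ j, Fin (M j) → A j) × B =>
          ω.1 = z.1 ∧ (∀ j, ω.2.1 j (m j) = z.2.1 j) ∧
            (∀ j, ω.2.1 j (m' j) = x' j) ∧ ω.2.2 = z.2.2), μ ω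
        = q0 z.1 * qB z.1 z.2.2 * (∏ j, qj j z.1 (z.2.1 j)) *
            ∏ j ∈ Finset.univ.filter (fun j => m j ≠ m' j), qj j z.1 (x' j))
    (F : Set (Ω₀ × (∀ j, A j) × B))
    (γ : ℝ)
    (hγ : ∀ z ∈ F,
      p z ≤ Real.exp γ * (cvMargS p ∅ z * ∏ j, qj j z.1 (z.2.1 j)))
    (α β : Finset (Fin k) → ℝ)
    (hα : ∀ S : Finset (Fin k), S.Nonempty → S ≠ Finset.univ →
      ∀ z ∈ cvProjS F S,
        Real.exp (α S) * (cvMargS p ∅ z * ∏ j ∈ S, qj j z.1 (z.2.1 j))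
          ≤ cvMargS p S z)
    (hβ : ∀ S : Finset (Fin k), S.Nonempty → S ≠ Finset.univ →
      ∀ z ∈ F,
        Real.exp (β Sᶜ) * (cvMargS p S z * ∏ j ∈ Sᶜ, qj j z.1 (z.2.1 j))
          ≤ p z)
    (ε : ℝ) (hε0 : 0 < ε) (hε1 : ε < 1) :
    ∑ ω ∈ Finset.univ.filter (fun ω : Ω₀ × (∀ j, Fin (M j) → A j) × B =>
        ∀ m : ∀ j, Fin (M j), (ω.1, fun j => ω.2.1 j (m j), ω.2.2) ∉ F), μ ω
    ≤ (1 / ε) * (∑ z ∈ Finset.univ.filter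
          (fun z : Ω₀ × (∀ j, A j) × B => z ∉ F), p z)
      + (1 / (1 - ε)) * (∏ j, (M j : ℝ))⁻¹ * Real.exp γ
      + (1 / (1 - ε)) ^ 2 *
        ∑ S ∈ Finset.univ.filter (fun S : Finset (Fin k) =>
            S.Nonempty ∧ S ≠ Finset.univ),
          (∏ j ∈ S, (M j : ℝ))⁻¹ *
            Real.exp (-α S - 2 * β Sᶜ + 2 * γ) := by
  set K : ℝ := (1 / (1 - ε)) * (∏ j, (M j : ℝ))⁻¹ * Real.exp γ + (1 / (1 - ε)) ^ 2 *
        ∑ S ∈ Finset.univ.filter (fun S : Finset (Fin k) =>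
            S.Nonempty ∧ S ≠ Finset.univ),
          (∏ j ∈ S, (M j : ℝ))⁻¹ *
            Real.exp (-α S - 2 * β Sᶜ + 2 * γ) with hK
  have h1ε : 0 < 1 - ε := by linarith
  have hK0 : 0 ≤ K := by positivity
  let R : Ω₀ → B → ℝ := fun a b => ∑ x, p (a, x, b)
  have hR0 : ∀ a b, 0 ≤ R a b := fun a b => Finset.sum_nonneg fun x _ => hp0 _
  have hRq : ∀ a b, q0 a * qB a b = R a b := by
    intro a b
    rw [(hqB a b).2, cv_slice p a b (fun _ => True) _ (by simp)]
    simp [R]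
  have hmargS : ∀ S z, cvMargS p S z =
      ∑ y ∈ Finset.univ.filter (fun y : (∀ j, A j) => ∀ j ∈ S, y j = z.2.1 j),
        p (z.1, y, z.2.2) := by
    intro S z
    unfold cvMargS
    rw [cv_slice p z.1 z.2.2 (fun y => ∀ j ∈ S, y j = z.2.1 j) _ (by simp)]
  have hmarg0 : ∀ z, cvMargS p ∅ z = R z.1 z.2.2 := by
    intro z; rw [hmargS]; simp [R]
  have hqsum : ∀ j a, q0 a ≠ 0 → ∑ x, qj j a x = 1 := by
    intro j a ha
    have : q0 a * ∑ x, qj j a x = q0 a := by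
      rw [Finset.mul_sum]
      simp only [fun x => (hqj j a x).2]
      rw [hq0 a]
      rw [← Finset.sum_fiberwise (Finset.univ.filter
        (fun z : Ω₀ × (∀ j, A j) × B => z.1 = a)) (fun z => z.2.1 j) p]
      simp only [Finset.filter_filter]
    exact mul_left_cancel₀ ha (by rw [this, mul_one])
  have hlaw' : ∀ a b (m : ∀ j, Fin (M j)) (x : ∀ j, A j),
      ∑ w ∈ Finset.univ.filter (fun w : (∀ j, Fin (M j) → A j) => ∀ j, w j (m j) = x j),
        μ (a, w, b) = R a b * ∏ j, qj j a (x j) := by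
    intro a b m x
    have := hlaw m (a, x, b)
    rw [cv_slice μ a b (fun w => ∀ j, w j (m j) = x j) _ (by simp)] at this
    rw [this, ← hRq]; ring
  have hνR : ∀ a b, ∑ w, μ (a, w, b) = R a b := by
    intro a b
    have m : ∀ j, Fin (M j) := fun j => ⟨0, hM j⟩
    have h1 : ∑ w, μ (a, w, b) = ∑ x : (∀ j, A j), R a b * ∏ j, qj j a (x j) := by
      rw [← Finset.sum_fiberwise Finset.univ
        (fun (w : (∀ j, Fin (M j) → A j)) => (fun j => w j (m j) : ∀ j, A j))]
      refine Finset.sum_congr rfl fun x _ => ?_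
      rw [← hlaw' a b m x]
      refine Finset.sum_congr ?_ fun _ _ => rfl
      refine Finset.filter_congr fun w _ => ?_
      exact funext_iff
    rw [h1, ← Finset.mul_sum]
    by_cases ha : q0 a = 0
    · rw [← hRq, ha]; simp
    · have : ∑ x : (∀ j, A j), ∏ j, qj j a (x j) = ∏ j, ∑ x, qj j a x := by
        rw [Finset.prod_univ_sum, Fintype.piFinset_univ]
      rw [this, Finset.prod_eq_one fun j _ => hqsum j a ha, mul_one]
  have hslice : ∀ a b,
      ∑ w ∈ Finset.univ.filter (fun w : (∀ j, Fin (M j) → A j) =>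
        ∀ m : ∀ j, Fin (M j), (a, (fun j => w j (m j)), b) ∉ F), μ (a, w, b)
      ≤ (1 / ε) * (∑ x ∈ Finset.univ.filter (fun x : (∀ j, A j) => (a, x, b) ∉ F), p (a, x, b))
        + R a b * K := by
    intro a b
    have hle : ∑ w ∈ Finset.univ.filter (fun w : (∀ j, Fin (M j) → A j) =>
        ∀ m : ∀ j, Fin (M j), (a, (fun j => w j (m j)), b) ∉ F), μ (a, w, b) ≤ R a b := by
      rw [← hνR]
      exact Finset.sum_le_sum_of_subset_of_nonneg (Finset.subset_univ _) fun _ _ _ => hμ0 _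
    have hFc0 : 0 ≤ ∑ x ∈ Finset.univ.filter (fun x : (∀ j, A j) => (a, x, b) ∉ F),
      p (a, x, b) := Finset.sum_nonneg fun _ _ => hp0 _
    have hRK : 0 ≤ R a b * K := mul_nonneg (hR0 a b) hK0
    have hεi : 0 < 1 / ε := by positivity
    by_cases hbad : ε * R a b ≤
        ∑ x ∈ Finset.univ.filter (fun x : (∀ j, A j) => (a, x, b) ∉ F), p (a, x, b)
    · have : R a b ≤ (1 / ε) *
          ∑ x ∈ Finset.univ.filter (fun x : (∀ j, A j) => (a, x, b) ∉ F), p (a, x, b) := by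
        rw [one_div, ← div_eq_inv_mul, le_div_iff₀ hε0]; linarith
      linarith
    push Not at hbad
    have hRpos : 0 < R a b := by
      by_contra h
      have : R a b = 0 := le_antisymm (not_lt.1 h) (hR0 a b)
      rw [this] at hbad; linarith
    have hsplit := Finset.sum_filter_add_sum_filter_not Finset.univ
      (fun x : (∀ j, A j) => (a, x, b) ∈ F) (fun x => p (a, x, b))
    have := cv_core M hM (fun j => qj j a) (fun j x => (hqj j a x).1) (fun x => p (a, x, b))
      (fun _ => hp0 _) (fun w => μ (a, w, b)) (fun _ => hμ0 _) (R a b) hRpos rfl (hνR a b)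
      (hlaw' a b) (by
        intro m m' hmm x x' hxx
        have := hpairlaw m m' hmm (a, x, b) x' hxx
        rw [cv_slice μ a b (fun w => (∀ j, w j (m j) = x j) ∧ (∀ j, w j (m' j) = x' j)) _
          (by simp [and_assoc])] at this
        rw [this, hRq])
      (Finset.univ.filter (fun x : (∀ j, A j) => (a, x, b) ∈ F)) γ (by
        intro x hx
        have := hγ (a, x, b) (by simpa using hx)
        rwa [hmarg0] at this) α β (by
        intro S h1 h2 x hx
        have := hα S h1 h2 (a, x, b) ⟨x, fun _ _ => rfl, by simpa using hx⟩
        rwa [hmarg0, hmargS] at this) (by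
        intro S h1 h2 x hx
        have := hβ S h1 h2 (a, x, b) (by simpa using hx)
        rwa [hmargS] at this) ε hε1 (by
        have : R a b = ∑ x, p (a, x, b) := rfl
        linarith)
    simp only [Finset.mem_filter, Finset.mem_univ, true_and] at this
    have h2 : 0 ≤ (1 / ε) *
      ∑ x ∈ Finset.univ.filter (fun x : (∀ j, A j) => (a, x, b) ∉ F), p (a, x, b) :=
      mul_nonneg hεi.le hFc0
    refine this.trans ?_
    linarith
  have hdec : ∀ {X : Type _} [Fintype X] (f : Ω₀ × X × B → ℝ),
      ∑ z, f z = ∑ a, ∑ b, ∑ x, f (a, x, b) := by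
    intro X _ f
    rw [Fintype.sum_prod_type]
    refine Finset.sum_congr rfl fun a _ => ?_
    rw [Fintype.sum_prod_type_right]
  have hdec' : ∀ {X : Type _} [Fintype X] (f : Ω₀ × X × B → ℝ),
      ∑ z, f z = ∑ a, ∑ b, ∑ x, f (a, x, b) := by
    intro X _ f
    rw [Fintype.sum_prod_type]
    refine Finset.sum_congr rfl fun a _ => ?_
    rw [Fintype.sum_prod_type_right]
  rw [add_assoc, ← hK, Finset.sum_filter, Finset.sum_filter, hdec, hdec']
  have hR1 : ∑ a, ∑ b, R a b = 1 := by rw [← hp1, hdec']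
  calc _ ≤ ∑ a, ∑ b, ((1 / ε) * (∑ x ∈ Finset.univ.filter
          (fun x : (∀ j, A j) => (a, x, b) ∉ F), p (a, x, b)) + R a b * K) := by
        refine Finset.sum_le_sum fun a _ => Finset.sum_le_sum fun b _ => ?_
        rw [← Finset.sum_filter]
        exact hslice a b
    _ = _ := by
        simp only [Finset.sum_add_distrib, ← Finset.mul_sum, ← Finset.sum_mul, hR1, one_mul,
          Finset.sum_filter]
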